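/- Let G be a finite connected simple graph and K a field. If the edge ring K[G] has a 3-linear resolution, then K[G] is a hypersurface, i.e., the toric ideal I_G is a principal ideal. -/

import Mathlib

open MvPolynomial Pointwise

/-- `ρ({i,j}) = e_i + e_j` : the 0/1 (incidence) vector of an edge. -/
noncomputable def rho {N : ℕ} (e : Sym2 (Fin N)) : Fin N → ℝ :=
  fun v => if v ∈ e then 1 else 0

/-- The edge polytope of a graph on `Fin N`. -/
noncomputable def edgePolytope {N : ℕ} (G : SimpleGraph (Fin N)) : Set (Fin N → ℝ) :=
  convexHull ℝ (rho '' G.edgeSet)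

/-- Number of lattice points of the `t`-th dilation (`= 1` for `t = 0`). -/
noncomputable def ehr {N : ℕ} (P : Set (Fin N → ℝ)) (t : ℕ) : ℕ :=
  if t = 0 then 1 else Nat.card {x : Fin N → ℤ // (fun i => (x i : ℝ)) ∈ (t : ℝ) • P}

/-- The dimension of a polytope: the rank of the direction of its affine span. -/
noncomputable def polyDim {N : ℕ} (P : Set (Fin N → ℝ)) : ℕ :=
  Module.finrank ℝ (affineSpan ℝ P).direction

/-- The `i`-th coefficient of `(1-λ)^{d+1} (1 + Σ_{t≥1} |tP ∩ Z^N| λ^t)`. -/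
noncomputable def deltaCoeff {N : ℕ} (P : Set (Fin N → ℝ)) (i : ℕ) : ℤ :=
  ∑ j ∈ Finset.range (i + 1),
    (-1 : ℤ) ^ j * (Nat.choose (polyDim P + 1) j : ℤ) * (ehr P (i - j) : ℤ)

/-- The degree of the δ-polynomial of `P`. -/
noncomputable def polyDeg {N : ℕ} (P : Set (Fin N → ℝ)) : ℕ :=
  sSup {i : ℕ | deltaCoeff P i ≠ 0}

/-- The monomial `t_i t_j s` attached to an edge `{i,j}`; `s` is the variable `none`. -/
noncomputable def edgeMonom (K : Type*) [Field K] {V : Type*} (e : Sym2 V) :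
    MvPolynomial (Option V) K :=
  Sym2.lift ⟨fun i j => X (some i) * X (some j) * X none, fun i j => by ring⟩ e

/-- The edge ring `K[G]`, the subalgebra generated by the monomials `t^{ρ(e)} s`. -/
noncomputable def edgeRing (K : Type*) [Field K] {V : Type*} (G : SimpleGraph V) :
    Subalgebra K (MvPolynomial (Option V) K) :=
  Algebra.adjoin K (edgeMonom K '' G.edgeSet)

/-- The toric ideal `I_G`: kernel of `x_e ↦ t^{ρ(e)} s`. -/
noncomputable def toricIdeal (K : Type*) [Field K] {V : Type*} (G : SimpleGraph V) :
    Ideal (MvPolynomial G.edgeSet K) :=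
  RingHom.ker (MvPolynomial.aeval (fun e : G.edgeSet => edgeMonom K (e : Sym2 V)) :
    MvPolynomial G.edgeSet K →ₐ[K] MvPolynomial (Option V) K)

/-- `S/I` has a `q`-linear (minimal graded free) resolution: there is a graded free
resolution of `S/I` in which the free module at homological step `i ≥ 1` is generated
in the single degree `q + i - 1`; equivalently all Betti numbers `β_{i,j}` with
`j ≠ q + i - 1` vanish. -/
def HasLinearResolution {σ K : Type*} [Field K] (q : ℕ)
    (I : Ideal (MvPolynomial σ K)) : Prop :=
  ∃ (b : ℕ → ℕ)
    (φ₀ : (Fin (b 0) →₀ MvPolynomial σ K) →ₗ[MvPolynomial σ K] MvPolynomial σ K)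
    (φ : ∀ i : ℕ,
      (Fin (b (i + 1)) →₀ MvPolynomial σ K) →ₗ[MvPolynomial σ K]
        (Fin (b i) →₀ MvPolynomial σ K)),
    LinearMap.range φ₀ = I ∧
    LinearMap.ker φ₀ = LinearMap.range (φ 0) ∧
    (∀ i, LinearMap.ker (φ i) = LinearMap.range (φ (i + 1))) ∧
    (∀ j, (φ₀ (Finsupp.single j 1)).IsHomogeneous q) ∧
    (∀ i j k, ((φ i (Finsupp.single j 1)) k).IsHomogeneous 1)

/-!
The toric ideal of a monomial map is spanned by binomials, and a binomial `x^u - x^w` in `I_G` is a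
pair of multisets of edges of `G` with the same endpoints. If the cubics generating `I_G` have
linear first syzygies, then the Koszul syzygy of two cubic binomials is a combination of linear
ones; comparing coefficients, one side of the first binomial can be moved one step towards the
second by exchanging a single edge, and remains a side of a cubic binomial. Since `I_G` contains no
quadric, `G` has no 4-cycle, so a cubic binomial lives on a hexagon or on a bowtie (two triangles
sharing a vertex). Every exchange there leads to a 4-cycle: hence there is only one cubic binomial
up to sign, and it generates `I_G`.
-/

section LinearPresentation

open scoped Matrix

variable {σ K : Type*} [Field K]

/-- `F` lists homogeneous generators of `I` of degree `q`, and the rows of `s`, whose entries are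
linear forms, generate the module of syzygies of `F`. -/
structure IsLinearPresentation {ι κ : Type*} [Fintype ι] [Fintype κ]
    (I : Ideal (MvPolynomial σ K)) (q : ℕ) (F : ι → MvPolynomial σ K)
    (s : Matrix κ ι (MvPolynomial σ K)) : Prop where
  span_eq : I = Ideal.span (Set.range F)
  isHomogeneous_gen : ∀ j, (F j).IsHomogeneous q
  isHomogeneous_syz : ∀ k j, (s k j).IsHomogeneous 1
  mulVec_eq_zero : s *ᵥ F = 0
  exists_eq_vecMul : ∀ a, a ⬝ᵥ F = 0 → ∃ c, a = c ᵥ* s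

/-- `I` is generated in degree `q` by finitely many polynomials with linear first syzygies; these
are the first two steps of a `q`-linear resolution. -/
def HasLinearPresentation (q : ℕ) (I : Ideal (MvPolynomial σ K)) : Prop :=
  ∃ (a b : ℕ) (F : Fin a → MvPolynomial σ K) (s : Matrix (Fin b) (Fin a) (MvPolynomial σ K)),
    IsLinearPresentation I q F s

lemma linearMap_apply_eq_sum {R M ι : Type*} [Semiring R] [AddCommMonoid M] [Module R M]
    [Fintype ι] (φ : (ι →₀ R) →ₗ[R] M) (a : ι →₀ R) :
    φ a = ∑ j, a j • φ (Finsupp.single j 1) := by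
  conv_lhs => rw [← Finsupp.univ_sum_single a, map_sum]
  simp only [← map_smul, Finsupp.smul_single_one]

lemma HasLinearResolution.hasLinearPresentation {q : ℕ} {I : Ideal (MvPolynomial σ K)}
    (hI : HasLinearResolution q I) : HasLinearPresentation q I := by
  obtain ⟨b, φ₀, φ, hrange, hker, -, hq, h1⟩ := hI
  refine ⟨b 0, b 1, fun j => φ₀ (Finsupp.single j 1),
    Matrix.of fun k => φ 0 (Finsupp.single k 1), ?_, hq, h1 0, ?_, fun a ha => ?_⟩
  · ext x
    rw [← hrange, LinearMap.mem_range, Ideal.mem_span_range_iff_exists_fun]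
    refine Finsupp.equivFunOnFinite.exists_congr fun a => ?_
    rw [linearMap_apply_eq_sum φ₀ a]
    rfl
  · ext1 k
    have hk : φ₀ (φ 0 (Finsupp.single k 1)) = 0 :=
      LinearMap.mem_ker.1 (hker ▸ LinearMap.mem_range_self _ _)
    rwa [linearMap_apply_eq_sum] at hk
  · obtain ⟨c, hc⟩ : Finsupp.equivFunOnFinite.symm a ∈ LinearMap.range (φ 0) := by
      rwa [← hker, LinearMap.mem_ker, linearMap_apply_eq_sum]
    refine ⟨c, funext fun j => ?_⟩
    rw [linearMap_apply_eq_sum] at hc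
    simpa [Matrix.vecMul, dotProduct] using (DFunLike.congr_fun hc j).symm

lemma coeff_mul_of_forall_degree_lt {q : ℕ} {g : MvPolynomial σ K}
    (hg : ∀ n : σ →₀ ℕ, n.degree < q → coeff n g = 0) {m : σ →₀ ℕ} (hm : m.degree ≤ q)
    (a : MvPolynomial σ K) : coeff m (a * g) = coeff 0 a * coeff m g := by
  classical
  rw [coeff_mul, Finset.sum_eq_single (0, m)]
  · rintro ⟨x, y⟩ hxy hne
    obtain rfl : x + y = m := by simpa using hxy
    have hx : x.degree ≠ 0 := by
      rw [Ne, Finsupp.degree_eq_zero_iff]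
      rintro rfl
      simp at hne
    rw [map_add] at hm
    rw [hg y (by omega), mul_zero]
  · simp

lemma coeff_mul_of_isHomogeneous_one {l : MvPolynomial σ K} (hl : l.IsHomogeneous 1)
    (p : MvPolynomial σ K) (n : σ →₀ ℕ) :
    coeff n (l * p) =
      ∑ e ∈ n.support, coeff (Finsupp.single e 1) l * coeff (n - Finsupp.single e 1) p := by
  classical
  rw [coeff_mul]
  refine (Finset.sum_of_injOn (fun e => (Finsupp.single e 1, n - Finsupp.single e 1))
    ?_ ?_ ?_ fun _ _ => rfl).symm
  · intro e _ e' _ h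
    exact (Finsupp.single_left_inj one_ne_zero).1 (Prod.ext_iff.1 h).1
  · intro e he
    rw [Finset.mem_coe, Finset.HasAntidiagonal.mem_antidiagonal]
    exact add_tsub_cancel_of_le
      (Finsupp.single_le_iff.2 (Nat.one_le_iff_ne_zero.2 (Finsupp.mem_support_iff.1 he)))
  · rintro ⟨x, y⟩ hxy hne
    obtain rfl : x + y = n := by simpa using hxy
    by_contra h
    have hx : x.degree = 1 := by
      by_contra hx
      exact h (by rw [hl.coeff_eq_zero hx, zero_mul])
    obtain ⟨e, rfl⟩ := (Finsupp.sum_eq_one_iff x).1 hx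
    exact hne ⟨e, by simp, by simp⟩

namespace IsLinearPresentation

variable {ι κ : Type*} [Fintype ι] [Fintype κ] {I : Ideal (MvPolynomial σ K)} {q : ℕ}
  {F : ι → MvPolynomial σ K} {s : Matrix κ ι (MvPolynomial σ K)}

lemma exists_eq_dotProduct (h : IsLinearPresentation I q F s) {f : MvPolynomial σ K}
    (hf : f ∈ I) : ∃ a, a ⬝ᵥ F = f := by
  rwa [h.span_eq, Ideal.mem_span_range_iff_exists_fun] at hf

lemma gen_mem (h : IsLinearPresentation I q F s) (j : ι) : F j ∈ I :=
  h.span_eq ▸ Ideal.subset_span ⟨j, rfl⟩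

lemma coeff_dotProduct (h : IsLinearPresentation I q F s) (a : ι → MvPolynomial σ K)
    {m : σ →₀ ℕ} (hm : m.degree ≤ q) :
    coeff m (a ⬝ᵥ F) = coeff 0 (a ⬝ᵥ fun j => C (coeff m (F j))) := by
  simp only [dotProduct, coeff_sum]
  refine Finset.sum_congr rfl fun j _ => ?_
  rw [coeff_mul_of_forall_degree_lt
      (fun n hn => (h.isHomogeneous_gen j).coeff_eq_zero hn.ne) hm, mul_comm (a j) (C _),
    coeff_C_mul, mul_comm]

lemma coeff_eq_zero_of_degree_lt (h : IsLinearPresentation I q F s) {f : MvPolynomial σ K}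
    (hf : f ∈ I) {m : σ →₀ ℕ} (hm : m.degree < q) : coeff m f = 0 := by
  obtain ⟨a, rfl⟩ := h.exists_eq_dotProduct hf
  have hF (j) : coeff m (F j) = 0 := (h.isHomogeneous_gen j).coeff_eq_zero hm.ne
  rw [h.coeff_dotProduct a hm.le]
  simp [hF, dotProduct]

lemma exists_syzygy_coeff_ne_zero (h : IsLinearPresentation I q F s) {f g : MvPolynomial σ K}
    (hf : f ∈ I) (hg : g ∈ I) {u m : σ →₀ ℕ} (hu : u.degree ≤ q) (hm : m.degree ≤ q)
    (hdet : coeff u f * coeff m g ≠ coeff u g * coeff m f) :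
    ∃ k, ∃ e ∈ m.support, ∑ j, coeff (Finsupp.single e 1) (s k j) * coeff u (F j) ≠ 0 := by
  -- The Koszul syzygy of `f` and `g` is a combination of the rows of `s`; pairing it with the
  -- coefficients of `F` at `u` leaves, at the monomial `m`, the determinant in `hdet`.
  obtain ⟨a, rfl⟩ := h.exists_eq_dotProduct hf
  obtain ⟨b, rfl⟩ := h.exists_eq_dotProduct hg
  set f := a ⬝ᵥ F
  set g := b ⬝ᵥ F
  set γ : ι → MvPolynomial σ K := fun j => C (coeff u (F j)) with hγ
  obtain ⟨c, hc⟩ := h.exists_eq_vecMul (g • a - f • b) (by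
    simp only [sub_dotProduct, smul_dotProduct, smul_eq_mul, f, g]; ring)
  have hlow {p} (hp : p ∈ I) (n : σ →₀ ℕ) (hn : n.degree < q) : coeff n p = 0 :=
    h.coeff_eq_zero_of_degree_lt hp hn
  have hcoeff : coeff m ((g • a - f • b) ⬝ᵥ γ) ≠ 0 := by
    rw [sub_dotProduct, smul_dotProduct, smul_dotProduct, smul_eq_mul, smul_eq_mul, mul_comm g,
      mul_comm f, coeff_sub, coeff_mul_of_forall_degree_lt (hlow hg) hm,
      coeff_mul_of_forall_degree_lt (hlow hf) hm, ← h.coeff_dotProduct a hu,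
      ← h.coeff_dotProduct b hu]
    exact sub_ne_zero.2 hdet
  rw [hc, ← Matrix.dotProduct_mulVec, dotProduct, coeff_sum] at hcoeff
  obtain ⟨k, -, hk⟩ := Finset.exists_ne_zero_of_sum_ne_zero hcoeff
  have hl : ((s *ᵥ γ) k).IsHomogeneous 1 :=
    IsHomogeneous.sum _ _ _ fun j _ => (h.isHomogeneous_syz k j).mul (isHomogeneous_C σ _)
  rw [mul_comm, coeff_mul_of_isHomogeneous_one hl] at hk
  obtain ⟨e, he, hne⟩ := Finset.exists_ne_zero_of_sum_ne_zero hk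
  refine ⟨k, e, he, ne_of_eq_of_ne ?_ (left_ne_zero_of_mul hne)⟩
  simp [Matrix.mulVec, dotProduct, hγ, coeff_sum, mul_comm _ (C _), mul_comm (coeff u _)]

lemma exists_exchange (h : IsLinearPresentation I q F s) {f g : MvPolynomial σ K}
    (hf : f ∈ I) (hg : g ∈ I) {u m : σ →₀ ℕ} (hu : u.degree ≤ q) (hm : m.degree ≤ q)
    (hdet : coeff u f * coeff m g ≠ coeff u g * coeff m f) :
    ∃ e ∈ m.support, ∃ e' ≠ e, ∃ r, u = Finsupp.single e' 1 + r ∧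
      ∃ p ∈ I, p.IsHomogeneous q ∧ coeff (Finsupp.single e 1 + r) p ≠ 0 := by
  obtain ⟨k, e, he, hne⟩ := h.exists_syzygy_coeff_ne_zero hf hg hu hm hdet
  set p : σ → MvPolynomial σ K := fun x => ∑ j, C (coeff (Finsupp.single x 1) (s k j)) * F j
    with hp
  have hsum : ∑ x ∈ (u + Finsupp.single e 1).support,
      coeff (u + Finsupp.single e 1 - Finsupp.single x 1) (p x) = 0 := by
    have hrow : ∑ j, s k j * F j = 0 := congrFun h.mulVec_eq_zero k
    rw [← coeff_zero (u + Finsupp.single e 1), ← hrow, coeff_sum]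
    simp only [hp, coeff_sum, coeff_C_mul,
      coeff_mul_of_isHomogeneous_one (h.isHomogeneous_syz k _)]
    rw [Finset.sum_comm]
  have hpe : coeff (u + Finsupp.single e 1 - Finsupp.single e 1) (p e) ≠ 0 := by
    simpa [hp, coeff_sum] using hne
  obtain ⟨e', he', hee', hpe'⟩ : ∃ e' ∈ (u + Finsupp.single e 1).support, e' ≠ e ∧
      coeff (u + Finsupp.single e 1 - Finsupp.single e' 1) (p e') ≠ 0 := by
    by_contra! hall
    rw [Finset.sum_eq_single_of_mem e (by simp) hall] at hsum
    exact hpe hsum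
  obtain ⟨r, rfl⟩ : ∃ r, u = Finsupp.single e' 1 + r := by
    refine exists_add_of_le (Finsupp.single_le_iff.2 (Nat.one_le_iff_ne_zero.2 ?_))
    simpa [hee'.symm] using he'
  refine ⟨e, he, e', hee', r, rfl, p e', ?_, ?_, ?_⟩
  · exact Ideal.sum_mem _ fun j _ => Ideal.mul_mem_left _ _ (h.gen_mem j)
  · exact IsHomogeneous.sum _ _ _ fun j _ => by
      simpa using (isHomogeneous_C σ _).mul (h.isHomogeneous_gen j)
  · rwa [add_assoc, add_tsub_cancel_left, add_comm] at hpe'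

end IsLinearPresentation

end LinearPresentation

section MonomialMap

variable {σ τ : Type*} (K : Type*) [Field K] (d : σ → τ →₀ ℕ)

/-- The toric ideal of `x_i ↦ t^{d i}`. -/
noncomputable def monomialMapKer : Ideal (MvPolynomial σ K) :=
  RingHom.ker (aeval fun i => monomial (d i) (1 : K) : MvPolynomial σ K →ₐ[K] MvPolynomial τ K)

/-- The exponents of a nonzero binomial of degree `q` in the toric ideal of `x_i ↦ t^{d i}`. -/
structure IsFiberPair (q : ℕ) (m n : σ →₀ ℕ) : Prop where
  degree_left : m.degree = q
  ne : m ≠ n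
  weight_eq : Finsupp.weight d m = Finsupp.weight d n

variable {K d}

lemma mem_monomialMapKer {p : MvPolynomial σ K} :
    p ∈ monomialMapKer K d ↔ aeval (fun i => monomial (d i) (1 : K)) p = 0 := Iff.rfl

lemma aeval_monomial_monomial (m : σ →₀ ℕ) (c : K) :
    aeval (fun i => monomial (d i) (1 : K)) (monomial m c) = monomial (Finsupp.weight d m) c := by
  simp only [aeval_monomial, algebraMap_eq, Finsupp.prod, monomial_pow, one_pow]
  rw [Finsupp.weight_apply, Finsupp.sum, monomial_sum_index]

lemma monomial_sub_monomial_mem_monomialMapKer {m n : σ →₀ ℕ}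
    (h : Finsupp.weight d m = Finsupp.weight d n) :
    monomial m (1 : K) - monomial n 1 ∈ monomialMapKer K d := by
  rw [mem_monomialMapKer, map_sub, aeval_monomial_monomial, aeval_monomial_monomial, h, sub_self]

lemma exists_ne_coeff_ne_zero {p : MvPolynomial σ K} (hp : p ∈ monomialMapKer K d)
    {m : σ →₀ ℕ} (hm : coeff m p ≠ 0) :
    ∃ n, m ≠ n ∧ Finsupp.weight d m = Finsupp.weight d n ∧ coeff n p ≠ 0 := by
  classical
  by_contra! hall
  have h0 : coeff (Finsupp.weight d m) (aeval (fun i => monomial (d i) (1 : K)) p) = 0 := by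
    rw [mem_monomialMapKer.1 hp, coeff_zero]
  rw [p.as_sum, map_sum, coeff_sum, Finset.sum_eq_single m] at h0
  · rw [aeval_monomial_monomial, coeff_monomial, if_pos rfl] at h0
    exact hm h0
  · intro n hn hnm
    rw [aeval_monomial_monomial, coeff_monomial, if_neg]
    exact fun h => mem_support_iff.1 hn (hall n hnm.symm h.symm)
  · intro h
    simp [notMem_support_iff.1 h]

lemma eq_zero_of_support_subset_singleton {p : MvPolynomial σ K} (hp : p ∈ monomialMapKer K d)
    {n : σ →₀ ℕ} (h : ∀ t, coeff t p ≠ 0 → t = n) : p = 0 := by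
  ext t
  by_contra ht
  obtain ⟨t', hne, -, ht'⟩ := exists_ne_coeff_ne_zero hp ht
  exact hne ((h t ht).trans (h t' ht').symm)

lemma IsFiberPair.exists_exchange {q : ℕ} {m n m' n' : σ →₀ ℕ}
    (hI : HasLinearPresentation q (monomialMapKer K d)) (h : IsFiberPair d q m n)
    (h' : IsFiberPair d q m' n') (hmm' : m ≠ m') (hmn' : m ≠ n') :
    ∃ e ∈ m'.support, ∃ e' ≠ e, ∃ r, m = Finsupp.single e' 1 + r ∧
      ∃ t, IsFiberPair d q (Finsupp.single e 1 + r) t := by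
  obtain ⟨a, b, F, s, hF⟩ := hI
  obtain ⟨e, he, e', hne, r, hr, p, hp, hpq, hpr⟩ := hF.exists_exchange (u := m) (m := m')
    (monomial_sub_monomial_mem_monomialMapKer h.weight_eq)
    (monomial_sub_monomial_mem_monomialMapKer h'.weight_eq) h.degree_left.le h'.degree_left.le (by
      classical
      simp [coeff_monomial, h.ne.symm, h'.ne.symm, hmm'.symm, hmn'.symm])
  obtain ⟨t, hne', hw, -⟩ := exists_ne_coeff_ne_zero hp hpr
  exact ⟨e, he, e', hne, r, hr, t, by_contra fun hd => hpr (hpq.coeff_eq_zero hd), hne', hw⟩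

lemma HasLinearPresentation.not_isFiberPair_of_lt {p q : ℕ}
    (hI : HasLinearPresentation q (monomialMapKer K d)) (hpq : p < q) (m n : σ →₀ ℕ) :
    ¬IsFiberPair d p m n := by
  classical
  intro h
  obtain ⟨a, b, F, s, hF⟩ := hI
  have := hF.coeff_eq_zero_of_degree_lt (monomial_sub_monomial_mem_monomialMapKer h.weight_eq)
    (h.degree_left.trans_lt hpq)
  simp [coeff_monomial, h.ne.symm] at this

lemma HasLinearPresentation.exists_eq_span_singleton {q : ℕ}
    (hI : HasLinearPresentation q (monomialMapKer K d))
    (huniq : ∀ m n m' n', IsFiberPair d q m n → IsFiberPair d q m' n' → m = m' ∨ m = n') :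
    ∃ f, monomialMapKer K d = Ideal.span {f} := by
  classical
  obtain ⟨a, b, F, s, hF⟩ := hI
  have hpair {j m} (hm : coeff m (F j) ≠ 0) : ∃ n, IsFiberPair d q m n := by
    obtain ⟨n, hne, hw, -⟩ := exists_ne_coeff_ne_zero (hF.gen_mem j) hm
    exact ⟨n, by_contra fun hd => hm ((hF.isHomogeneous_gen j).coeff_eq_zero hd), hne, hw⟩
  by_cases hex : ∃ m n, IsFiberPair d q m n
  · obtain ⟨m, n, h⟩ := hex
    set f : MvPolynomial σ K := monomial m 1 - monomial n 1 with hf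
    have hfI : f ∈ monomialMapKer K d := monomial_sub_monomial_mem_monomialMapKer h.weight_eq
    refine ⟨f, le_antisymm ?_ ((Ideal.span_singleton_le_iff_mem _).2 hfI)⟩
    rw [hF.span_eq, Ideal.span_le]
    rintro - ⟨j, rfl⟩
    suffices F j - C (coeff m (F j)) * f = 0 from
      Ideal.mem_span_singleton'.2 ⟨_, (sub_eq_zero.1 this).symm⟩
    refine eq_zero_of_support_subset_singleton (n := n)
      (sub_mem (hF.gen_mem j) (Ideal.mul_mem_left _ _ hfI)) fun t ht => ?_
    by_contra htn
    by_cases htm : t = m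
    · simp [htm, hf, coeff_monomial, h.ne.symm] at ht
    · obtain ⟨t', ht'⟩ := hpair (j := j) (m := t) (by
        simpa [hf, coeff_monomial, Ne.symm htm, Ne.symm htn] using ht)
      exact (huniq _ _ _ _ ht' h).elim htm htn
  · refine ⟨0, ?_⟩
    have hF0 (j) : F j = 0 := by
      ext m
      by_contra hm
      exact hex ⟨m, hpair hm⟩
    rw [hF.span_eq, Ideal.span_singleton_zero, Ideal.span_eq_bot]
    rintro - ⟨j, rfl⟩
    exact hF0 j

end MonomialMap

section EdgeIdeal

variable {V : Type*} {G : SimpleGraph V}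

/-- The endpoints of a multiset of edges, with multiplicity. -/
def endpoints (u : Multiset (Sym2 V)) : Multiset V := (u.map Sym2.toMultiset).sum

@[simp]
lemma endpoints_zero : endpoints (0 : Multiset (Sym2 V)) = 0 := rfl

@[simp]
lemma endpoints_cons (e : Sym2 V) (u : Multiset (Sym2 V)) :
    endpoints (e ::ₘ u) = e.toMultiset + endpoints u := by
  simp [endpoints]

@[simp]
lemma endpoints_singleton (e : Sym2 V) : endpoints {e} = e.toMultiset := by
  simp [endpoints]

@[simp]
lemma toMultiset_mk (a b : V) : Sym2.toMultiset s(a, b) = {a, b} := rfl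

lemma endpoints_add (u w : Multiset (Sym2 V)) :
    endpoints (u + w) = endpoints u + endpoints w := by
  simp [endpoints]

lemma card_endpoints (u : Multiset (Sym2 V)) : (endpoints u).card = 2 * u.card := by
  induction u using Multiset.induction_on with
  | empty => rfl
  | cons e u ih =>
    rw [endpoints_cons, Multiset.card_add, ih, Multiset.card_cons, Sym2.card_toMultiset]
    ring

lemma card_eq_of_endpoints_eq {u w : Multiset (Sym2 V)} (h : endpoints u = endpoints w) :
    u.card = w.card := by
  have := congrArg Multiset.card h
  rw [card_endpoints, card_endpoints] at this
  omega

/-- The exponent of the monomial `t_i t_j s` attached to an edge. -/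
noncomputable def edgeExponent (e : Sym2 V) : Option V →₀ ℕ :=
  Sym2.lift ⟨fun i j => Finsupp.single (some i) 1 + Finsupp.single (some j) 1 +
    Finsupp.single none 1, fun _ _ => congrArg (· + _) (add_comm _ _)⟩ e

lemma edgeMonom_eq_monomial (K : Type*) [Field K] (e : Sym2 V) :
    edgeMonom K e = monomial (edgeExponent e) 1 := by
  induction e with
  | h i j => simp [edgeMonom, edgeExponent, X, monomial_mul]

lemma toMultiset_edgeExponent (e : Sym2 V) :
    (edgeExponent e).toMultiset = e.toMultiset.map some + {none} := by
  induction e with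
  | h i j => simp [edgeExponent, Finsupp.toMultiset_single]

/-- The multiset of edges underlying an exponent of `K[x_e : e ∈ E(G)]`. -/
noncomputable def edgesOf (m : G.edgeSet →₀ ℕ) : Multiset (Sym2 V) :=
  m.toMultiset.map (↑)

@[simp]
lemma edgesOf_add (m n : G.edgeSet →₀ ℕ) : edgesOf (m + n) = edgesOf m + edgesOf n := by
  simp [edgesOf]

@[simp]
lemma edgesOf_single (e : G.edgeSet) : edgesOf (Finsupp.single e 1) = {(e : Sym2 V)} := by
  simp [edgesOf]

lemma edgesOf_injective : Function.Injective (edgesOf (G := G)) := by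
  classical
  exact (Multiset.map_injective Subtype.val_injective).comp Finsupp.orderIsoMultiset.injective

lemma card_edgesOf (m : G.edgeSet →₀ ℕ) : (edgesOf m).card = m.degree := by
  rw [edgesOf, Multiset.card_map, Finsupp.card_toMultiset, Finsupp.degree_apply, Finsupp.sum]
  rfl

lemma mem_edgeSet_of_mem_edgesOf {m : G.edgeSet →₀ ℕ} {e : Sym2 V} (he : e ∈ edgesOf m) :
    e ∈ G.edgeSet := by
  obtain ⟨e', -, rfl⟩ := Multiset.mem_map.1 he
  exact e'.2

lemma exists_edgesOf_eq {u : Multiset (Sym2 V)} (hu : ∀ e ∈ u, e ∈ G.edgeSet) :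
    ∃ m : G.edgeSet →₀ ℕ, edgesOf m = u := by
  classical
  lift u to Multiset G.edgeSet using hu
  exact ⟨Multiset.toFinsupp u, by simp [edgesOf]⟩

lemma toMultiset_weight_edgeExponent (m : G.edgeSet →₀ ℕ) :
    (Finsupp.weight (fun e : G.edgeSet => edgeExponent (e : Sym2 V)) m).toMultiset =
      (endpoints (edgesOf m)).map some + Multiset.replicate (edgesOf m).card none := by
  induction m using Finsupp.induction_linear with
  | zero => simp [edgesOf]
  | add m n hm hn =>
    rw [map_add, map_add, hm, hn, edgesOf_add, endpoints_add, Multiset.map_add, Multiset.card_add,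
      Multiset.replicate_add, add_add_add_comm]
  | single e k =>
    rw [Finsupp.weight_single, map_nsmul, toMultiset_edgeExponent]
    simp [edgesOf, endpoints, Multiset.map_nsmul, Multiset.nsmul_singleton]

lemma weight_edgeExponent_eq_iff {m n : G.edgeSet →₀ ℕ} :
    Finsupp.weight (fun e : G.edgeSet => edgeExponent (e : Sym2 V)) m =
      Finsupp.weight (fun e : G.edgeSet => edgeExponent (e : Sym2 V)) n ↔
      endpoints (edgesOf m) = endpoints (edgesOf n) := by
  classical
  rw [← Finsupp.orderIsoMultiset.injective.eq_iff, Finsupp.coe_orderIsoMultiset,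
    toMultiset_weight_edgeExponent, toMultiset_weight_edgeExponent]
  refine ⟨fun h => Multiset.ext' fun v => ?_, fun h => by rw [h, card_eq_of_endpoints_eq h]⟩
  simpa [Multiset.count_map_eq_count' _ _ (Option.some_injective V), Multiset.count_replicate]
    using congrArg (Multiset.count (some v)) h

lemma toricIdeal_eq_monomialMapKer (K : Type*) [Field K] :
    toricIdeal K G = monomialMapKer K (fun e : G.edgeSet => edgeExponent (e : Sym2 V)) := by
  simp only [toricIdeal, monomialMapKer, edgeMonom_eq_monomial]

/-- The multisets of edges of `G` underlying a nonzero binomial of degree `q` in `I_G`. -/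
structure IsEdgeBinomial (G : SimpleGraph V) (q : ℕ) (u w : Multiset (Sym2 V)) : Prop where
  left_mem : ∀ e ∈ u, e ∈ G.edgeSet
  right_mem : ∀ e ∈ w, e ∈ G.edgeSet
  card_left : u.card = q
  ne : u ≠ w
  endpoints_eq : endpoints u = endpoints w

lemma isFiberPair_iff_isEdgeBinomial {q : ℕ} {m n : G.edgeSet →₀ ℕ} :
    IsFiberPair (fun e : G.edgeSet => edgeExponent (e : Sym2 V)) q m n ↔
      IsEdgeBinomial G q (edgesOf m) (edgesOf n) := by
  constructor
  · rintro ⟨hdeg, hne, hw⟩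
    exact ⟨fun _ => mem_edgeSet_of_mem_edgesOf, fun _ => mem_edgeSet_of_mem_edgesOf,
      (card_edgesOf m).trans hdeg, edgesOf_injective.ne hne, weight_edgeExponent_eq_iff.1 hw⟩
  · rintro ⟨-, -, hcard, hne, he⟩
    exact ⟨(card_edgesOf m).symm.trans hcard, fun h => hne (congrArg edgesOf h),
      weight_edgeExponent_eq_iff.2 he⟩

lemma IsEdgeBinomial.exists_isFiberPair {q : ℕ} {u w : Multiset (Sym2 V)}
    (h : IsEdgeBinomial G q u w) :
    ∃ m n : G.edgeSet →₀ ℕ, edgesOf m = u ∧ edgesOf n = w ∧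
      IsFiberPair (fun e : G.edgeSet => edgeExponent (e : Sym2 V)) q m n := by
  obtain ⟨m, rfl⟩ := exists_edgesOf_eq h.left_mem
  obtain ⟨n, rfl⟩ := exists_edgesOf_eq h.right_mem
  exact ⟨m, n, rfl, rfl, isFiberPair_iff_isEdgeBinomial.2 h⟩

/-- `e` can replace an edge of `u` so that the result is again a side of a binomial in `I_G`. -/
def IsExchange (G : SimpleGraph V) (q : ℕ) (u : Multiset (Sym2 V)) (e : Sym2 V) : Prop :=
  ∃ e' r, u = e' ::ₘ r ∧ e ≠ e' ∧ ∃ v, IsEdgeBinomial G q (e ::ₘ r) v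

/-- A side of a binomial of degree `q` can be moved one step towards any other binomial of degree
`q` by exchanging a single edge. -/
def HasExchange (G : SimpleGraph V) (q : ℕ) : Prop :=
  ∀ u w u' w', IsEdgeBinomial G q u w → IsEdgeBinomial G q u' w' → u ≠ u' → u ≠ w' →
    ∃ e ∈ u', IsExchange G q u e

/-- `I_G` contains no quadric. -/
def NoQuadrics (G : SimpleGraph V) : Prop := ∀ u w, ¬IsEdgeBinomial G 2 u w

section

variable {K : Type*} [Field K] {q : ℕ}

lemma hasExchange_of_hasLinearPresentation (hI : HasLinearPresentation q (toricIdeal K G)) :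
    HasExchange G q := by
  rw [toricIdeal_eq_monomialMapKer] at hI
  intro u w u' w' h h' huu' huw'
  obtain ⟨m, n, rfl, rfl, hmn⟩ := h.exists_isFiberPair
  obtain ⟨m', n', rfl, rfl, hmn'⟩ := h'.exists_isFiberPair
  obtain ⟨e, he, e', hne, r, rfl, t, ht⟩ :=
    hmn.exists_exchange hI hmn' (fun h => huu' (h ▸ rfl)) (fun h => huw' (h ▸ rfl))
  rw [isFiberPair_iff_isEdgeBinomial, edgesOf_add, edgesOf_single, Multiset.singleton_add] at ht
  refine ⟨e, ?_, e', edgesOf r, ?_, Subtype.coe_ne_coe.2 hne.symm, edgesOf t, ht⟩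
  · exact Multiset.mem_map_of_mem _ ((Finsupp.mem_toMultiset _ _).2 he)
  · rw [edgesOf_add, edgesOf_single, Multiset.singleton_add]

lemma noQuadrics_of_hasLinearPresentation (hI : HasLinearPresentation q (toricIdeal K G))
    (hq : 2 < q) : NoQuadrics G := by
  rw [toricIdeal_eq_monomialMapKer] at hI
  intro u w h
  obtain ⟨m, n, -, -, hmn⟩ := h.exists_isFiberPair
  exact hI.not_isFiberPair_of_lt hq m n hmn

lemma toricIdeal_eq_span_singleton (hI : HasLinearPresentation q (toricIdeal K G))
    (huniq : ∀ u w u' w', IsEdgeBinomial G q u w → IsEdgeBinomial G q u' w' → u = u' ∨ u = w') :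
    ∃ f, toricIdeal K G = Ideal.span {f} := by
  rw [toricIdeal_eq_monomialMapKer] at hI ⊢
  refine hI.exists_eq_span_singleton fun m n m' n' h h' => ?_
  simpa only [edgesOf_injective.eq_iff] using huniq _ _ _ _
    (isFiberPair_iff_isEdgeBinomial.1 h) (isFiberPair_iff_isEdgeBinomial.1 h')

end

end EdgeIdeal

section CubicBinomials

variable {V : Type*} {G : SimpleGraph V} {q : ℕ} {u w : Multiset (Sym2 V)}

lemma pair_eq_pair_iff {α : Type*} {a b c d : α} :
    ({a, b} : Multiset α) = {c, d} ↔ a = c ∧ b = d ∨ a = d ∧ b = c := by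
  simp only [Multiset.insert_eq_cons, Multiset.cons_eq_cons, Multiset.singleton_eq_cons_iff,
    Multiset.singleton_inj]
  grind

lemma toMultiset_injective : Function.Injective (Sym2.toMultiset : Sym2 V → Multiset V) := by
  intro e f h
  induction e with | h a b =>
  induction f with | h c d =>
  exact Sym2.eq_iff.2 (pair_eq_pair_iff.1 h)

lemma mem_endpoints {x : V} : x ∈ endpoints u ↔ ∃ e ∈ u, x ∈ e := by
  induction u using Multiset.induction_on with
  | empty => simp
  | cons e u ih => simp [ih]

lemma IsEdgeBinomial.symm (h : IsEdgeBinomial G q u w) : IsEdgeBinomial G q w u :=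
  ⟨h.right_mem, h.left_mem, (card_eq_of_endpoints_eq h.endpoints_eq).symm.trans h.card_left,
    h.ne.symm, h.endpoints_eq.symm⟩

lemma IsEdgeBinomial.of_cons {e : Sym2 V} (h : IsEdgeBinomial G (q + 1) (e ::ₘ u) (e ::ₘ w)) :
    IsEdgeBinomial G q u w where
  left_mem _ hf := h.left_mem _ (Multiset.mem_cons_of_mem hf)
  right_mem _ hf := h.right_mem _ (Multiset.mem_cons_of_mem hf)
  card_left := by simpa using h.card_left
  ne huw := h.ne (huw ▸ rfl)
  endpoints_eq := by simpa using h.endpoints_eq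

lemma IsEdgeBinomial.exists_mk_mem_right (h : IsEdgeBinomial G q u w) {a : V}
    (ha : a ∈ endpoints u) : ∃ b ∈ endpoints u, s(a, b) ∈ w := by
  obtain ⟨e, he, hae⟩ := mem_endpoints.1 (h.endpoints_eq ▸ ha)
  obtain ⟨b, rfl⟩ := Sym2.mem_iff_exists.1 hae
  exact ⟨b, h.endpoints_eq ▸ mem_endpoints.2 ⟨_, he, Sym2.mem_mk_right a b⟩, he⟩

lemma endpoints_triple (a₀ a₁ a₂ a₃ a₄ a₅ : V) :
    endpoints {s(a₀, a₁), s(a₂, a₃), s(a₄, a₅)} = {a₀, a₁, a₂, a₃, a₄, a₅} := by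
  simp only [Multiset.insert_eq_cons, endpoints_cons, endpoints_singleton, toMultiset_mk]
  simp only [← Multiset.singleton_add]
  abel

lemma exists_eq_triple {α : Type*} {u : Multiset α} (hu : u.card = 3) {e f : α} (he : e ∈ u)
    (hf : f ∈ u) (hef : e ≠ f) : ∃ g, u = {e, f, g} := by
  obtain ⟨r, rfl⟩ := Multiset.exists_cons_of_mem he
  obtain ⟨r, rfl⟩ := Multiset.exists_cons_of_mem ((Multiset.mem_cons.1 hf).resolve_left hef.symm)
  obtain ⟨g, rfl⟩ : ∃ g, r = {g} := Multiset.card_eq_one.1 (by simpa using hu)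
  exact ⟨g, rfl⟩

lemma exists_mk_eq_of_cons_toMultiset_eq {a b : V} (hab : a ≠ b) {e f : Sym2 V}
    (h : a ::ₘ e.toMultiset = b ::ₘ f.toMultiset) : ∃ c, e = s(b, c) ∧ f = s(c, a) := by
  have hbe : b ∈ e := by
    have : b ∈ a ::ₘ e.toMultiset := h ▸ Multiset.mem_cons_self _ _
    simpa [hab.symm] using this
  obtain ⟨c, rfl⟩ := Sym2.mem_iff_exists.1 hbe
  refine ⟨c, rfl, toMultiset_injective ?_⟩
  rw [← Multiset.cons_inj_right b, ← h, toMultiset_mk, toMultiset_mk, Multiset.pair_comm c]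
  exact Multiset.cons_swap a b {c}

lemma NoQuadrics.eq_or_eq (hQ : NoQuadrics G) {a b c d : V} (hab : G.Adj a b) (hbc : G.Adj b c)
    (hcd : G.Adj c d) (hda : G.Adj d a) : a = c ∨ b = d := by
  by_contra hne
  refine hQ {s(a, b), s(c, d)} {s(b, c), s(d, a)}
    ⟨by simp [hab, hcd], by simp [hbc, hda], rfl, ?_, ?_⟩
  · rw [Ne, pair_eq_pair_iff]
    grind
  · simp only [Multiset.insert_eq_cons, endpoints_cons, endpoints_singleton, toMultiset_mk]
    simp only [← Multiset.singleton_add]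
    abel

lemma IsEdgeBinomial.notMem_right (hQ : NoQuadrics G) (h : IsEdgeBinomial G 3 u w) {e : Sym2 V}
    (he : e ∈ u) : e ∉ w := by
  intro hew
  obtain ⟨r, rfl⟩ := Multiset.exists_cons_of_mem he
  obtain ⟨t, rfl⟩ := Multiset.exists_cons_of_mem hew
  exact hQ r t h.of_cons

/-- A closed walk of length six whose consecutive edges are distinct. -/
structure IsHexWalk (G : SimpleGraph V) (a₀ a₁ a₂ a₃ a₄ a₅ : V) : Prop where
  adj₀ : G.Adj a₀ a₁
  adj₁ : G.Adj a₁ a₂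
  adj₂ : G.Adj a₂ a₃
  adj₃ : G.Adj a₃ a₄
  adj₄ : G.Adj a₄ a₅
  adj₅ : G.Adj a₅ a₀
  ne₀ : a₀ ≠ a₂
  ne₁ : a₁ ≠ a₃
  ne₂ : a₂ ≠ a₄
  ne₃ : a₃ ≠ a₅
  ne₄ : a₄ ≠ a₀
  ne₅ : a₅ ≠ a₁

lemma IsHexWalk.isEdgeBinomial {a₀ a₁ a₂ a₃ a₄ a₅ : V} (h : IsHexWalk G a₀ a₁ a₂ a₃ a₄ a₅)
    (h' : ¬(a₀ = a₃ ∧ a₁ = a₄)) :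
    IsEdgeBinomial G 3 {s(a₀, a₁), s(a₂, a₃), s(a₄, a₅)}
      {s(a₁, a₂), s(a₃, a₄), s(a₅, a₀)} := by
  obtain ⟨h0, h1, h2, h3, h4, h5, n0, n1, -, -, -, n5⟩ := h
  refine ⟨by simp [h0, h2, h4], by simp [h1, h3, h5], rfl, fun heq => ?_, ?_⟩
  · have : s(a₀, a₁) ∈ ({s(a₁, a₂), s(a₃, a₄), s(a₅, a₀)} : Multiset (Sym2 V)) := heq ▸ by simp
    simp only [Multiset.insert_eq_cons, Multiset.mem_cons, Multiset.mem_singleton, Sym2.eq_iff]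
      at this
    have := h0.ne
    grind
  · rw [endpoints_triple, endpoints_triple]
    simp only [Multiset.insert_eq_cons, ← Multiset.singleton_add]
    abel

lemma IsHexWalk.reflect {a₀ a₁ a₂ a₃ a₄ a₅ : V} (h : IsHexWalk G a₀ a₁ a₂ a₃ a₄ a₅) :
    IsHexWalk G a₃ a₂ a₁ a₀ a₅ a₄ :=
  ⟨h.adj₂.symm, h.adj₁.symm, h.adj₀.symm, h.adj₅.symm, h.adj₄.symm, h.adj₃.symm,
    h.ne₁.symm, h.ne₀.symm, h.ne₅.symm, h.ne₄.symm, h.ne₃.symm, h.ne₂.symm⟩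

lemma IsEdgeBinomial.exists_next (hQ : NoQuadrics G) (h : IsEdgeBinomial G 3 u w) {a b : V}
    (hab : s(a, b) ∈ u) : ∃ c, a ≠ c ∧ s(b, c) ∈ w := by
  obtain ⟨c, -, hbc⟩ := h.exists_mk_mem_right (mem_endpoints.2 ⟨_, hab, Sym2.mem_mk_right a b⟩)
  refine ⟨c, ?_, hbc⟩
  rintro rfl
  exact h.notMem_right hQ hab (Sym2.eq_swap ▸ hbc)

lemma IsEdgeBinomial.exists_isHexWalk (hQ : NoQuadrics G) (h : IsEdgeBinomial G 3 u w)
    {a₀ a₁ : V} (h01 : s(a₀, a₁) ∈ u) :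
    ∃ a₂ a₃ a₄ a₅, IsHexWalk G a₀ a₁ a₂ a₃ a₄ a₅ ∧
      u = {s(a₀, a₁), s(a₂, a₃), s(a₄, a₅)} ∧ w = {s(a₁, a₂), s(a₃, a₄), s(a₅, a₀)} := by
  obtain ⟨a₂, n02, h12⟩ := h.exists_next hQ h01
  obtain ⟨a₃, n13, h23⟩ := h.symm.exists_next hQ h12
  obtain ⟨a₄, n24, h34⟩ := h.exists_next hQ h23
  have adj01 : G.Adj a₀ a₁ := h.left_mem _ h01
  have adj12 : G.Adj a₁ a₂ := h.right_mem _ h12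
  have adj23 : G.Adj a₂ a₃ := h.left_mem _ h23
  have adj34 : G.Adj a₃ a₄ := h.right_mem _ h34
  have n04 : a₀ ≠ a₄ := by
    rintro rfl
    exact (hQ.eq_or_eq adj01 adj12 adj23 adj34).elim n02 n13
  obtain ⟨f, rfl⟩ := exists_eq_triple h.card_left h01 h23 (by grind [adj12.ne])
  obtain ⟨g, rfl⟩ := exists_eq_triple h.symm.card_left h12 h34 (by grind [adj23.ne])
  obtain ⟨a₅, rfl, rfl⟩ : ∃ a₅, f = s(a₄, a₅) ∧ g = s(a₅, a₀) := by
    refine exists_mk_eq_of_cons_toMultiset_eq n04 ?_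
    have := h.endpoints_eq
    simp only [Multiset.insert_eq_cons, endpoints_cons, endpoints_singleton, toMultiset_mk] at this
    simp only [← Multiset.singleton_add] at this ⊢
    rw [← add_right_inj ({a₁} + {a₂} + {a₃} : Multiset V)]
    convert this using 1 <;> abel
  have hdisj {e} := h.notMem_right hQ (e := e)
  refine ⟨a₂, a₃, a₄, a₅, ⟨adj01, adj12, adj23, adj34, h.left_mem s(a₄, a₅) (by simp),
    h.right_mem s(a₅, a₀) (by simp), n02, n13, n24, ?_, n04.symm, ?_⟩, rfl, rfl⟩
  · rintro rfl
    exact hdisj (e := s(a₃, a₄)) (by simp [Sym2.eq_swap (a := a₃)]) (by simp)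
  · rintro rfl
    exact hdisj (e := s(a₀, a₅)) (by simp) (by simp [Sym2.eq_swap (a := a₀)])

/-- Two triangles of `G`, with vertices `c, a, b` and `c, a', b'`, sharing only the vertex `c`. -/
structure IsBowtie (G : SimpleGraph V) (c a b a' b' : V) : Prop where
  adj_a : G.Adj c a
  adj_b : G.Adj c b
  adj_a' : G.Adj c a'
  adj_b' : G.Adj c b'
  adj_ab : G.Adj a b
  adj_ab' : G.Adj a' b'
  ne_aa' : a ≠ a'
  ne_ab' : a ≠ b'
  ne_ba' : b ≠ a'
  ne_bb' : b ≠ b'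

lemma IsEdgeBinomial.exists_isBowtie_of_not_nodup (hQ : NoQuadrics G)
    (h : IsEdgeBinomial G 3 u w) (hu : ¬(endpoints u).Nodup) :
    ∃ c a b a' b', IsBowtie G c a b a' b' ∧ endpoints u = {c, a, b, c, a', b'} := by
  rw [Multiset.nodup_iff_ne_cons_cons] at hu
  push Not at hu
  obtain ⟨c, t, hc⟩ := hu
  obtain ⟨e, he, hce⟩ := mem_endpoints.1 (hc ▸ Multiset.mem_cons_self c _)
  obtain ⟨a₁, rfl⟩ := Sym2.mem_iff_exists.1 hce
  obtain ⟨a₂, a₃, a₄, a₅, hw, rfl, rfl⟩ := h.exists_isHexWalk hQ he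
  have hdisj {e} := h.notMem_right hQ (e := e)
  obtain ⟨h0, h1, h2, h3, h4, h5, n0, n1, n2, n3, n4, n5⟩ := hw
  obtain rfl : c = a₃ := by
    rw [endpoints_triple, Multiset.insert_eq_cons, Multiset.cons_inj_right] at hc
    have : c ∈ ({a₁, a₂, a₃, a₄, a₅} : Multiset V) := hc ▸ Multiset.mem_cons_self c t
    simpa [h0.ne, n0, n4.symm, h5.ne'] using this
  refine ⟨c, a₁, a₂, a₄, a₅, ⟨h0, h2.symm, h3, h5.symm, h1, h4, ?_, n5.symm, n2, ?_⟩,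
    endpoints_triple ..⟩
  · rintro rfl
    exact hdisj (e := s(c, a₁)) (by simp) (by simp)
  · rintro rfl
    exact hdisj (e := s(a₂, c)) (by simp) (by simp)

section Bowtie

variable {c a b a' b' : V}

lemma IsBowtie.nodup (hb : IsBowtie G c a b a' b') :
    ({c, a, b, a', b'} : Multiset V).Nodup := by
  simp [hb.adj_a.ne, hb.adj_b.ne, hb.adj_a'.ne, hb.adj_b'.ne, hb.adj_ab.ne, hb.adj_ab'.ne,
    hb.ne_aa', hb.ne_ab', hb.ne_ba', hb.ne_bb']

lemma IsBowtie.exists_common_neighbor (hb : IsBowtie G c a b a' b') {p q : V}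
    (hp : p ∈ ({c, a, b, a', b'} : Multiset V)) (hq : q ∈ ({c, a, b, a', b'} : Multiset V))
    (hpq : p ≠ q) : ∃ r ∈ ({c, a, b, a', b'} : Multiset V), G.Adj p r ∧ G.Adj r q := by
  obtain ⟨h1, h2, h3, h4, h5, h6, -⟩ := hb
  simp only [Multiset.insert_eq_cons, Multiset.mem_cons, Multiset.mem_singleton] at hp hq ⊢
  rcases hp with rfl | rfl | rfl | rfl | rfl <;> rcases hq with rfl | rfl | rfl | rfl | rfl <;>
    grind [SimpleGraph.adj_comm]

lemma IsBowtie.eq_center (hQ : NoQuadrics G) (hb : IsBowtie G c a b a' b') {z : V}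
    (hz : z ∈ ({c, a, b, a', b'} : Multiset V))
    (hadj : ∀ y ∈ ({c, a, b, a', b'} : Multiset V), y ≠ z → G.Adj z y) : z = c := by
  obtain ⟨h1, h2, h3, h4, h5, h6, n1, n2, n3, n4⟩ := hb
  simp only [Multiset.insert_eq_cons, Multiset.mem_cons, Multiset.mem_singleton] at hz
  rcases hz with rfl | rfl | rfl | rfl | rfl
  · rfl
  · exact ((hQ.eq_or_eq (hadj a' (by simp) n1.symm) h6 h4.symm h1).elim n2 h3.ne').elim
  · exact ((hQ.eq_or_eq (hadj a' (by simp) n3.symm) h6 h4.symm h2).elim n4 h3.ne').elim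
  · exact ((hQ.eq_or_eq (hadj a (by simp) n1) h5 h2.symm h3).elim n3.symm h1.ne').elim
  · exact ((hQ.eq_or_eq (hadj a (by simp) n2) h5 h2.symm h4).elim n4.symm h1.ne').elim

lemma IsEdgeBinomial.endpoints_subset_bowtie (hQ : NoQuadrics G) (h : IsEdgeBinomial G 3 u w)
    (hb : IsBowtie G c a b a' b') {x : V}
    (hsub : endpoints u ⊆ x ::ₘ {c, a, b, a', b'}) : endpoints u ⊆ {c, a, b, a', b'} := by
  intro y hy
  by_contra hyB
  have hyx : y = x := (Multiset.mem_cons.1 (hsub hy)).resolve_right hyB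
  obtain ⟨z, hz, hyz⟩ := h.exists_mk_mem_right hy
  obtain ⟨z', hz', hyz'⟩ := h.symm.exists_mk_mem_right (h.endpoints_eq ▸ hy)
  have hadj : G.Adj y z := h.right_mem _ hyz
  have hadj' : G.Adj y z' := h.left_mem _ hyz'
  have hzz' : z ≠ z' := fun hh => h.notMem_right hQ (hh ▸ hyz') hyz
  have hzB := (Multiset.mem_cons.1 (hsub hz)).resolve_left (hyx ▸ hadj.ne')
  have hzB' := (Multiset.mem_cons.1 (hsub (h.endpoints_eq ▸ hz'))).resolve_left (hyx ▸ hadj'.ne')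
  obtain ⟨r, hr, hzr, hrz'⟩ := hb.exists_common_neighbor hzB hzB' hzz'
  exact (hQ.eq_or_eq hadj hzr hrz' hadj'.symm).elim (fun hh => hyB (hh ▸ hr)) hzz'

lemma IsEdgeBinomial.endpoints_eq_of_subset_bowtie (hQ : NoQuadrics G)
    (h : IsEdgeBinomial G 3 u w) (hb : IsBowtie G c a b a' b') {x : V}
    (hsub : endpoints u ⊆ x ::ₘ {c, a, b, a', b'}) : endpoints u = {c, a, b, c, a', b'} := by
  have hin := h.endpoints_subset_bowtie hQ hb hsub
  have hnd : ¬(endpoints u).Nodup := fun hnd => by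
    have := Multiset.card_le_card ((Multiset.le_iff_subset hnd).2 hin)
    rw [card_endpoints, h.card_left] at this
    simp at this
  obtain ⟨z, p, q, p', q', hz, hu⟩ := h.exists_isBowtie_of_not_nodup hQ hnd
  have heq : ({z, p, q, p', q'} : Multiset V) = {c, a, b, a', b'} := by
    refine Multiset.eq_of_le_of_card_le ((Multiset.le_iff_subset hz.nodup).2 fun y hy => hin ?_)
      (by simp)
    rw [hu]
    simp only [Multiset.insert_eq_cons, Multiset.mem_cons, Multiset.mem_singleton] at hy ⊢
    tauto
  obtain rfl : z = c := by
    refine hb.eq_center hQ (heq ▸ by simp) fun y hy hyz => ?_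
    rw [← heq] at hy
    simp only [Multiset.insert_eq_cons, Multiset.mem_cons, Multiset.mem_singleton] at hy
    rcases hy with rfl | rfl | rfl | rfl | rfl
    exacts [absurd rfl hyz, hz.adj_a, hz.adj_b, hz.adj_a', hz.adj_b']
  have := congrArg (z ::ₘ ·) heq
  rw [hu]
  simp only [Multiset.insert_eq_cons, ← Multiset.singleton_add] at this ⊢
  convert this using 1 <;> abel

end Bowtie

section Exchange

variable {e : Sym2 V} {x p : V}

lemma IsExchange.mem_edgeSet (he : IsExchange G q u e) : e ∈ G.edgeSet := by
  obtain ⟨-, r, -, -, v, hv⟩ := he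
  exact hv.left_mem e (Multiset.mem_cons_self e r)

lemma IsExchange.exists_endpoints_ne (he : IsExchange G q u e) :
    ∃ u' v, IsEdgeBinomial G q u' v ∧ endpoints u ≠ endpoints u' ∧
      ∀ y ∈ endpoints u', y ∈ endpoints u ∨ y ∈ e := by
  obtain ⟨e', r, rfl, hne, v, hv⟩ := he
  refine ⟨e ::ₘ r, v, hv, fun heq => hne ?_, fun y hy => ?_⟩
  · rw [endpoints_cons, endpoints_cons, add_left_inj] at heq
    exact (toMultiset_injective heq).symm
  · simp only [endpoints_cons, Multiset.mem_add, Sym2.mem_toMultiset] at hy ⊢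
    tauto

lemma IsExchange.exists_exchange_ne (hQ : NoQuadrics G) (hX : HasExchange G 3)
    (h : IsEdgeBinomial G 3 u w) (he : IsExchange G 3 u e) :
    ∃ f ≠ e, IsExchange G 3 u f ∧ ∀ y ∈ f, y ∈ endpoints u ∨ y ∈ e := by
  obtain ⟨e', r, rfl, hne, v, hv⟩ := he
  have hv_ne : e' ::ₘ r ≠ v := by
    rintro rfl
    obtain ⟨g, hg⟩ : ∃ g, g ∈ r := Multiset.card_pos_iff_exists_mem.1 (by
      have := h.card_left
      rw [Multiset.card_cons] at this
      omega)
    exact hv.notMem_right hQ (Multiset.mem_cons_of_mem hg) (Multiset.mem_cons_of_mem hg)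
  obtain ⟨f, hf, hfx⟩ := hX _ _ _ _ h hv.symm hv_ne fun hh =>
    hne ((Multiset.cons_inj_left r).1 hh).symm
  refine ⟨f, ?_, hfx, fun y hy => ?_⟩
  · rintro rfl
    exact hv.notMem_right hQ (Multiset.mem_cons_self f r) hf
  · have : y ∈ endpoints (e ::ₘ r) := hv.endpoints_eq ▸ mem_endpoints.2 ⟨f, hf, hy⟩
    simp only [endpoints_cons, Multiset.mem_add, Sym2.mem_toMultiset] at this ⊢
    tauto

lemma IsExchange.exists_touching (hQ : NoQuadrics G) (hX : HasExchange G 3)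
    (h : IsEdgeBinomial G 3 u w) (he : IsExchange G 3 u e) :
    ∃ x, ∃ p ∈ endpoints u, IsExchange G 3 u s(x, p) := by
  obtain ⟨f, hfe, hf, hsub⟩ := he.exists_exchange_ne hQ hX h
  obtain ⟨g, hg, p, hpg, hp⟩ : ∃ g, IsExchange G 3 u g ∧ ∃ p ∈ g, p ∈ endpoints u := by
    by_contra! hdisj
    induction f with | h a b =>
    have hab : G.Adj a b := hf.mem_edgeSet
    have ha := (hsub a (Sym2.mem_mk_left a b)).resolve_left (hdisj _ hf _ (Sym2.mem_mk_left a b))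
    have hb := (hsub b (Sym2.mem_mk_right a b)).resolve_left (hdisj _ hf _ (Sym2.mem_mk_right a b))
    exact hfe ((Sym2.mem_and_mem_iff hab.ne).1 ⟨ha, hb⟩).symm
  obtain ⟨x, rfl⟩ := Sym2.mem_iff_exists.1 hpg
  exact ⟨x, p, hp, Sym2.eq_swap ▸ hg⟩

lemma IsExchange.endpoints_nodup (hQ : NoQuadrics G) (hX : HasExchange G 3)
    (h : IsEdgeBinomial G 3 u w) (he : IsExchange G 3 u e) : (endpoints u).Nodup := by
  by_contra hnd
  obtain ⟨c, a, b, a', b', hb, hu⟩ := h.exists_isBowtie_of_not_nodup hQ hnd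
  obtain ⟨x, p, hp, hxp⟩ := he.exists_touching hQ hX h
  obtain ⟨u', v, hv, hne, hsub⟩ := hxp.exists_endpoints_ne
  refine hne (hu.trans (hv.endpoints_eq_of_subset_bowtie hQ hb (x := x) fun y hy => ?_).symm)
  have hy' := hsub y hy
  rw [hu] at hp hy'
  simp only [Multiset.insert_eq_cons, Multiset.mem_cons, Multiset.mem_singleton, Sym2.mem_iff]
    at hp hy' ⊢
  rcases hy' with hy' | rfl | rfl <;> tauto

lemma IsEdgeBinomial.endpoints_nodup_of_ne (hQ : NoQuadrics G) (hX : HasExchange G 3)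
    {u' w' : Multiset (Sym2 V)} (h : IsEdgeBinomial G 3 u w) (h' : IsEdgeBinomial G 3 u' w')
    (hne : endpoints u ≠ endpoints u') : (endpoints u).Nodup := by
  obtain ⟨e, -, he⟩ := hX u w u' w' h h' (fun hh => hne (congrArg _ hh))
    (fun hh => hne (hh ▸ h'.endpoints_eq.symm))
  exact he.endpoints_nodup hQ hX h

lemma IsExchange.notMem_endpoints (hQ : NoQuadrics G) (hX : HasExchange G 3)
    (h : IsEdgeBinomial G 3 u w) (he : IsExchange G 3 u s(x, p)) (hp : p ∈ endpoints u) :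
    x ∉ endpoints u := by
  intro hx
  obtain ⟨u', v, hv, hne, hsub⟩ := he.exists_endpoints_ne
  refine hne (Multiset.eq_of_le_of_card_le ((Multiset.le_iff_subset
    (hv.endpoints_nodup_of_ne hQ hX h hne.symm)).2 fun y hy => ?_) ?_).symm
  · rcases hsub y hy with hy | hy
    · exact hy
    · rcases Sym2.mem_iff.1 hy with rfl | rfl <;> assumption
  · rw [card_endpoints, card_endpoints, h.card_left, hv.card_left]

lemma IsExchange.exists_touching_ne (hQ : NoQuadrics G) (hX : HasExchange G 3)
    (h : IsEdgeBinomial G 3 u w) (he : IsExchange G 3 u s(x, p)) (hp : p ∈ endpoints u) :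
    ∃ q ∈ endpoints u, p ≠ q ∧ IsExchange G 3 u s(x, q) := by
  obtain ⟨f, hfe, hf, hsub⟩ := he.exists_exchange_ne hQ hX h
  have hsub' (y) (hy : y ∈ f) : y = x ∨ y ∈ endpoints u := by
    have := hsub y hy
    rw [Sym2.mem_iff] at this
    rcases this with hy | rfl | rfl <;> tauto
  have hxf : x ∈ f := by
    by_contra hxf
    induction f with | h a b =>
    have hmem (y) (hy : y ∈ s(a, b)) : y ∈ endpoints u :=
      (hsub' y hy).resolve_left fun hh => hxf (hh ▸ hy)
    exact hf.notMem_endpoints hQ hX h (hmem b (Sym2.mem_mk_right a b))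
      (hmem a (Sym2.mem_mk_left a b))
  obtain ⟨q, rfl⟩ := Sym2.mem_iff_exists.1 hxf
  have hxq : G.Adj x q := hf.mem_edgeSet
  refine ⟨q, (hsub' q (Sym2.mem_mk_right x q)).resolve_left hxq.ne', ?_, hf⟩
  rintro rfl
  exact hfe rfl

lemma IsExchange.not_isBowtie (hQ : NoQuadrics G) (hX : HasExchange G 3)
    (h : IsEdgeBinomial G 3 u w) (he : IsExchange G 3 u e) {c a b a' b' : V} :
    ¬IsBowtie G c a b a' b' := by
  rintro ⟨h1, h2, h3, h4, h5, h6, n1, n2, n3, -⟩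
  have hw : IsHexWalk G c a b c a' b' :=
    ⟨h1, h5, h2.symm, h3, h6, h4.symm, h2.ne, h1.ne', n3, h4.ne, h3.ne', n2.symm⟩
  have hb := hw.isEdgeBinomial fun hh => n1 hh.2
  have hnd : ¬(endpoints {s(c, a), s(b, c), s(a', b')}).Nodup := by
    simp
  exact hnd (hb.endpoints_nodup_of_ne hQ hX h fun hh =>
    hnd (hh ▸ he.endpoints_nodup hQ hX h))

lemma IsExchange.exists_isHexWalk (hQ : NoQuadrics G) (hX : HasExchange G 3) {a : V}
    {r : Multiset (Sym2 V)} (h : IsEdgeBinomial G 3 (s(p, a) ::ₘ r) w)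
    (he : IsExchange G 3 (s(p, a) ::ₘ r) s(x, p)) :
    ∃ b₂ b₃ b₄ b₅, IsHexWalk G x p b₂ b₃ b₄ b₅ ∧ r = {s(b₂, b₃), s(b₄, b₅)} := by
  have hx : x ∉ endpoints (s(p, a) ::ₘ r) := he.notMem_endpoints hQ hX h (by simp)
  obtain ⟨e', r', hr, hne, v, hv⟩ := he
  have hends : endpoints (s(x, p) ::ₘ r') ≠ endpoints (s(p, a) ::ₘ r) := fun hh =>
    hx (hh ▸ by simp)
  have hp : p ∉ endpoints r' := by
    have hnd := hv.endpoints_nodup_of_ne hQ hX h hends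
    rw [endpoints_cons, Multiset.nodup_add] at hnd
    exact Multiset.disjoint_left.1 hnd.2.2 (by simp)
  obtain ⟨rfl, rfl⟩ : s(p, a) = e' ∧ r = r' := by
    have hmem : s(p, a) ∈ e' ::ₘ r' := hr ▸ Multiset.mem_cons_self _ _
    obtain rfl : s(p, a) = e' := (Multiset.mem_cons.1 hmem).resolve_right fun hh =>
      hp (mem_endpoints.2 ⟨_, hh, Sym2.mem_mk_left p a⟩)
    exact ⟨rfl, (Multiset.cons_inj_right _).1 hr⟩
  obtain ⟨b₂, b₃, b₄, b₅, hw, hu, -⟩ := hv.exists_isHexWalk hQ (Multiset.mem_cons_self _ _)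
  exact ⟨b₂, b₃, b₄, b₅, hw, (Multiset.cons_inj_right _).1 hu⟩

lemma IsExchange.adj_of_isHexWalk (hQ : NoQuadrics G) (hX : HasExchange G 3)
    {a₀ a₁ a₂ a₃ a₄ a₅ : V} (hw : IsHexWalk G a₀ a₁ a₂ a₃ a₄ a₅)
    (h : IsEdgeBinomial G 3 {s(a₀, a₁), s(a₂, a₃), s(a₄, a₅)} w)
    (he : IsExchange G 3 {s(a₀, a₁), s(a₂, a₃), s(a₄, a₅)} s(x, a₀)) :
    G.Adj x a₃ ∧ G.Adj a₂ a₄ := by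
  have hnd := he.endpoints_nodup hQ hX h
  have hx := he.notMem_endpoints hQ hX h (by simp)
  have hbow {c a b a' b' : V} : ¬IsBowtie G c a b a' b' := he.not_isBowtie hQ hX h
  obtain ⟨b₂, b₃, b₄, b₅, hb, hr⟩ := he.exists_isHexWalk hQ hX h
  rw [endpoints_triple] at hnd hx
  simp only [Multiset.insert_eq_cons, Multiset.nodup_cons, Multiset.mem_cons,
    Multiset.mem_singleton, Multiset.nodup_singleton, not_or] at hnd hx
  obtain ⟨h0, h1, h2, h3, -, h5, -⟩ := hw
  obtain ⟨hxa, g1, -, g3, -, g5, -⟩ := hb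
  have hC4 {a b c d : V} := hQ.eq_or_eq (a := a) (b := b) (c := c) (d := d)
  simp only [pair_eq_pair_iff, Sym2.eq_iff] at hr
  -- The walk `x, a₀, b₂, b₃, b₄, b₅` is `x, a₀, a₅, a₄, a₂, a₃`; any other traversal of the edges
  -- `a₂a₃` and `a₄a₅` creates a 4-cycle or a bowtie.
  rcases hr with ⟨⟨rfl, rfl⟩ | ⟨rfl, rfl⟩, ⟨rfl, rfl⟩ | ⟨rfl, rfl⟩⟩ |
    ⟨⟨rfl, rfl⟩ | ⟨rfl, rfl⟩, ⟨rfl, rfl⟩ | ⟨rfl, rfl⟩⟩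
  · exact (hbow ⟨h0, g1, hxa.symm, h5.symm, h1, g5.symm, by grind, by grind, by grind,
      by grind⟩).elim
  · grind [hC4 g1 h2 g3 h5]
  · grind [hC4 h0 h1 h2 g1.symm]
  · grind [hC4 h0 h1 h2 g1.symm]
  · grind [hC4 g3 h1.symm h0.symm h5.symm]
  · exact ⟨g5.symm, g3.symm⟩
  · grind [hC4 g1 h3.symm g3.symm h5]
  · grind [hC4 hxa h0 h1 g5]

lemma IsEdgeBinomial.not_isExchange (hQ : NoQuadrics G) (hX : HasExchange G 3)
    (h : IsEdgeBinomial G 3 u w) : ¬IsExchange G 3 u e := by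
  intro he
  obtain ⟨x, p, hp, hxp⟩ := he.exists_touching hQ hX h
  obtain ⟨q, hq, hpq, hxq⟩ := hxp.exists_touching_ne hQ hX h hp
  obtain ⟨f, hf, hpf⟩ := mem_endpoints.1 hp
  obtain ⟨a₁, rfl⟩ := Sym2.mem_iff_exists.1 hpf
  obtain ⟨a₂, a₃, a₄, a₅, hw, rfl, rfl⟩ := h.exists_isHexWalk hQ hf
  obtain ⟨hx3, h24⟩ := hxp.adj_of_isHexWalk hQ hX hw h
  have hnd := he.endpoints_nodup hQ hX h
  have hx := hxp.notMem_endpoints hQ hX h hp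
  obtain ⟨h0, h1, h2, h3, h4, h5, -⟩ := id hw
  have gp : G.Adj x p := hxp.mem_edgeSet
  have gq : G.Adj x q := hxq.mem_edgeSet
  rw [endpoints_triple] at hnd hx hq
  simp only [Multiset.insert_eq_cons, Multiset.nodup_cons, Multiset.mem_cons,
    Multiset.mem_singleton, Multiset.nodup_singleton, not_or] at hnd hx hq
  have hC4 {a b c d : V} := hQ.eq_or_eq (a := a) (b := b) (c := c) (d := d)
  rcases hq with rfl | rfl | rfl | rfl | rfl | rfl
  · exact hpq rfl
  · grind [hC4 gq h1 h2 hx3.symm]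
  · grind [hC4 gp h0 h1 gq.symm]
  · have huv : ({s(p, a₁), s(a₂, q), s(a₄, a₅)} : Multiset (Sym2 V)) =
        {s(q, a₂), s(a₁, p), s(a₅, a₄)} := by
      rw [Sym2.eq_swap (a := q), Sym2.eq_swap (a := a₁), Sym2.eq_swap (a := a₅)]
      exact Multiset.cons_swap ..
    rw [huv] at h hxq
    obtain ⟨-, h15⟩ := hxq.adj_of_isHexWalk hQ hX hw.reflect h
    grind [hC4 h1 h24 h4 h15.symm]
  · grind [hC4 gp h5.symm h4.symm gq.symm]
  · grind [hC4 gq h4.symm h3.symm hx3.symm]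

lemma IsEdgeBinomial.eq_or_eq (hQ : NoQuadrics G) (hX : HasExchange G 3)
    {u' w' : Multiset (Sym2 V)} (h : IsEdgeBinomial G 3 u w) (h' : IsEdgeBinomial G 3 u' w') :
    u = u' ∨ u = w' := by
  by_contra! hne
  obtain ⟨e, -, he⟩ := hX u w u' w' h h' hne.1 hne.2
  exact h.not_isExchange hQ hX he

end Exchange

end CubicBinomials

theorem edgeRing_three_linear_resolution_hypersurface_general {V : Type*} (K : Type*) [Field K]
    (G : SimpleGraph V) (h3 : HasLinearPresentation 3 (toricIdeal K G)) :
    ∃ f : MvPolynomial G.edgeSet K, toricIdeal K G = Ideal.span {f} :=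
  toricIdeal_eq_span_singleton h3 fun _ _ _ _ =>
    IsEdgeBinomial.eq_or_eq (noQuadrics_of_hasLinearPresentation h3 (by norm_num))
      (hasExchange_of_hasLinearPresentation h3)

/-- If the edge ring `K[G]` of a finite connected simple graph `G`
has a `3`-linear resolution, then `K[G]` is a hypersurface, i.e. the toric ideal
`I_G` is principal. -/
theorem edgeRing_three_linear_resolution_hypersurface
    {N : ℕ} (K : Type*) [Field K] (G : SimpleGraph (Fin N)) (hG : G.Connected)
    (h3 : HasLinearResolution 3 (toricIdeal K G)) :
    ∃ f : MvPolynomial G.edgeSet K, toricIdeal K G = Ideal.span {f} :=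
  edgeRing_three_linear_resolution_hypersurface_general K G h3.hasLinearPresentation
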